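/- Suppose T is a countable complete theory that is not ℵ₀-categorical and has only finitely many countable models up to isomorphism. Then there exist a finite tuple ā and a prime model M over ā such that tp(ā) is not isolated and every complete n-type of T over ∅ (for every n < ω) is realized in M; moreover, there is a tuple b̄ in M such that tp(b̄) = tp(ā) and tp(ā/b̄) is not isolated. -/

import Mathlib

open FirstOrder Cardinal

namespace KimPaper

/-- A first-order formula in `n` free variables together with a tuple of
parameters from `M`. -/
def FP (L : FirstOrder.Language.{0, 0}) (M : Type) (n : ℕ) : Type :=
  Σ k : ℕ, L.Formula (Fin n ⊕ Fin k) × (Fin k → M)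

/-- Realization of a formula-with-parameters by a tuple. -/
def FP.Realize {L : FirstOrder.Language.{0, 0}} {M : Type} [L.Structure M] {n : ℕ}
    (F : FP L M n) (a : Fin n → M) : Prop :=
  F.2.1.Realize (Sum.elim a F.2.2)

/-- All parameters of the formula-with-parameters `F` lie in the set `A`. -/
def FP.ParamsIn {L : FirstOrder.Language.{0, 0}} {M : Type} {n : ℕ}
    (F : FP L M n) (A : Set M) : Prop :=
  ∀ i, F.2.2 i ∈ A

/-- The tuples `a` and `b` have the same complete type over the set `A`
(i.e. `tp(a/A) = tp(b/A)`). -/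
def SameType (L : FirstOrder.Language.{0, 0}) {M : Type} [L.Structure M]
    (A : Set M) {n : ℕ} (a b : Fin n → M) : Prop :=
  ∀ (k : ℕ) (φ : L.Formula (Fin n ⊕ Fin k)) (c : Fin k → M),
    (∀ i, c i ∈ A) → (φ.Realize (Sum.elim a c) ↔ φ.Realize (Sum.elim b c))

/-- The complete type of the tuple `a` over the set `A`: the collection of all
formulas with parameters in `A` realized by `a`. -/
def Tp (L : FirstOrder.Language.{0, 0}) {M : Type} [L.Structure M]
    (A : Set M) {n : ℕ} (a : Fin n → M) : Set (FP L M n) :=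
  {F | F.ParamsIn A ∧ F.Realize a}

/-- The (partial) type `p` entails the formula-with-parameters `F`. -/
def Entails {L : FirstOrder.Language.{0, 0}} {M : Type} [L.Structure M] {n : ℕ}
    (p : Set (FP L M n)) (F : FP L M n) : Prop :=
  ∀ a : Fin n → M, (∀ G ∈ p, G.Realize a) → F.Realize a

/-- The (partial) type `p` forks over the set `A`: there are a formula
`φ(x̄, ȳ)`, tuples `c i` all having the same type over `A`, and `k < ω` such
that `p ⊢ φ(x̄, c 0)` and `{φ(x̄, c i) | i < ω}` is `k`-inconsistent. -/
def ForksOver {L : FirstOrder.Language.{0, 0}} {M : Type} [L.Structure M] {n : ℕ}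
    (p : Set (FP L M n)) (A : Set M) : Prop :=
  ∃ (m : ℕ) (φ : L.Formula (Fin n ⊕ Fin m)) (c : ℕ → Fin m → M) (k : ℕ),
    (∀ i : ℕ, SameType L A (c i) (c 0)) ∧
    Entails p ⟨m, (φ, c 0)⟩ ∧
    ∀ s : Finset ℕ, s.card = k →
      ¬ ∃ a : Fin n → M, ∀ i ∈ s, φ.Realize (Sum.elim a (c i))

/-- The family of sets `C` is independent over `A`: for every `i` and every
tuple `c` from `C i`, `tp(c / A ∪ ⋃_{j ≠ i} C j)` does not fork over `A`. -/
def IndepFamily (L : FirstOrder.Language.{0, 0}) {M : Type} [L.Structure M]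
    {ι : Type} (A : Set M) (C : ι → Set M) : Prop :=
  ∀ (i : ι) (n : ℕ) (c : Fin n → M), (∀ j, c j ∈ C i) →
    ¬ ForksOver (Tp L (A ∪ ⋃ (j : ι) (_ : j ≠ i), C j) c) A

/-- The tuples `a` and `b` have the same complete type over `∅`. -/
def TpEq (L : FirstOrder.Language.{0, 0}) {M : Type} [L.Structure M] {n : ℕ}
    (a b : Fin n → M) : Prop :=
  ∀ ψ : L.Formula (Fin n), ψ.Realize a ↔ ψ.Realize b

/-- `tp(a/b)` is isolated: some formula `φ(x̄, b)` realized by `a` implies every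
formula over `b` realized by `a`. -/
def IsolatedOver (L : FirstOrder.Language.{0, 0}) {M : Type} [L.Structure M]
    {n m : ℕ} (a : Fin n → M) (b : Fin m → M) : Prop :=
  ∃ φ : L.Formula (Fin n ⊕ Fin m), φ.Realize (Sum.elim a b) ∧
    ∀ a' : Fin n → M, φ.Realize (Sum.elim a' b) →
      ∀ ψ : L.Formula (Fin n ⊕ Fin m),
        ψ.Realize (Sum.elim a b) → ψ.Realize (Sum.elim a' b)

/-- `tp(a/b)` is semi-isolated: some formula `φ(x̄, b)` realized by `a` implies
`tp(a)` (the complete type of `a` over `∅`). -/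
def SemiIsolatedOver (L : FirstOrder.Language.{0, 0}) {M : Type} [L.Structure M]
    {n m : ℕ} (a : Fin n → M) (b : Fin m → M) : Prop :=
  ∃ φ : L.Formula (Fin n ⊕ Fin m), φ.Realize (Sum.elim a b) ∧
    ∀ a' : Fin n → M, φ.Realize (Sum.elim a' b) →
      ∀ ψ : L.Formula (Fin n), ψ.Realize a → ψ.Realize a'

/-- `tp(a)` (over `∅`) is isolated. -/
def Isolated0 (L : FirstOrder.Language.{0, 0}) {M : Type} [L.Structure M]
    {n : ℕ} (a : Fin n → M) : Prop :=
  ∃ φ : L.Formula (Fin n), φ.Realize a ∧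
    ∀ a' : Fin n → M, φ.Realize a' →
      ∀ ψ : L.Formula (Fin n), ψ.Realize a → ψ.Realize a'

/-- `M` is `κ`-saturated: every finitely satisfiable set of formulas over a
parameter set of size `< κ` is realized in `M`. -/
def Saturated (L : FirstOrder.Language.{0, 0}) (M : Type) [L.Structure M]
    (κ : Cardinal.{0}) : Prop :=
  ∀ (n : ℕ) (A : Set M) (p : Set (FP L M n)),
    #A < κ → (∀ F ∈ p, F.ParamsIn A) →
    (∀ s : Finset (FP L M n), ↑s ⊆ p → ∃ a : Fin n → M, ∀ F ∈ s, F.Realize a) →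
    ∃ a : Fin n → M, ∀ F ∈ p, F.Realize a

/-- `M` is strongly `κ`-homogeneous: every partial elementary map defined on a
set of size `< κ` extends to an automorphism of `M`. -/
def StronglyHomogeneous (L : FirstOrder.Language.{0, 0}) (M : Type) [L.Structure M]
    (κ : Cardinal.{0}) : Prop :=
  ∀ (A : Set M) (f : M → M), #A < κ →
    (∀ (n : ℕ) (φ : L.Formula (Fin n)) (a : Fin n → M), (∀ i, a i ∈ A) →
      (φ.Realize a ↔ φ.Realize (f ∘ a))) →
    ∃ σ : M ≃[L] M, ∀ x ∈ A, σ x = f x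

/-- `M` is a simple structure: every complete type over a set `B` does not fork
over some subset `A ⊆ B` of size at most `|T| = |L| + ℵ₀`. -/
def SimpleStruct (L : FirstOrder.Language.{0, 0}) (M : Type) [L.Structure M] : Prop :=
  ∀ (n : ℕ) (B : Set M) (a : Fin n → M),
    ∃ A : Set M, A ⊆ B ∧ #A ≤ L.card + ℵ₀ ∧ ¬ ForksOver (Tp L B a) A

/-- `M` is a supersimple structure: every complete type over a set `B` does not
fork over some finite subset of `B`. -/
def SupersimpleStruct (L : FirstOrder.Language.{0, 0}) (M : Type) [L.Structure M] : Prop :=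
  ∀ (n : ℕ) (B : Set M) (a : Fin n → M),
    ∃ A : Set M, A ⊆ B ∧ A.Finite ∧ ¬ ForksOver (Tp L B a) A

/-- The setoid of countably infinite models of `T` up to `L`-isomorphism. -/
def cmSetoid (L : FirstOrder.Language.{0, 0}) (T : L.Theory) :
    Setoid {N : Language.Theory.ModelType.{0, 0, 0} T // Countable N ∧ Infinite N} where
  r N₁ N₂ := Nonempty (N₁.1 ≃[L] N₂.1)
  iseqv := ⟨fun N => ⟨Language.Equiv.refl L N.1⟩,
    fun ⟨e⟩ => ⟨e.symm⟩,
    fun ⟨e⟩ ⟨f⟩ => ⟨f.comp e⟩⟩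

/-- The number of countably infinite models of `T`, counted up to isomorphism. -/
noncomputable def numCountableModels (L : FirstOrder.Language.{0, 0}) (T : L.Theory) :
    Cardinal.{1} :=
  #(Quotient (cmSetoid L T))

/-- The tuples `a` (in `M`) and `a'` (in `N`) have the same complete type over `∅`. -/
def TpEqCross (L : FirstOrder.Language.{0, 0}) {M N : Type} [L.Structure M] [L.Structure N]
    {n : ℕ} (a : Fin n → M) (a' : Fin n → N) : Prop :=
  ∀ ψ : L.Formula (Fin n), ψ.Realize a ↔ ψ.Realize a'

/-- `M` is a prime model over the tuple `a`: whenever `a'` is a tuple in a model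
`N` of `T` with `tp(a') = tp(a)`, there is an elementary embedding of `M` into
`N` sending `a` to `a'`. -/
def PrimeOver (L : FirstOrder.Language.{0, 0}) (T : L.Theory) (M : Type) [L.Structure M]
    {n : ℕ} (a : Fin n → M) : Prop :=
  ∀ (N : Language.Theory.ModelType.{0, 0, 0} T) (a' : Fin n → N),
    TpEqCross L a a' → ∃ g : M ↪ₑ[L] N, ∀ i, g (a i) = a' i

/-!
For each of the finitely many countable models of `T` that omits some type, choose such a type, and
let `a` realize all of the chosen types at once. Then every model containing a realization of
`tp(a)` is weakly saturated. Finitely many countable models realize only countably many types, so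
isolated types are dense over finite tuples and there is a countable model `M` that contains `a`
and is atomic, hence prime, over `a`. If `tp(a)` were isolated, then `M` would be atomic over `∅`;
being weakly saturated it would make every model atomic, and `T` would be `ℵ₀`-categorical.

As `tp(a)` is not isolated, it is consistent with the negations of all formulas over `a` that imply
it. This gives realizations `x` and `b` of `tp(a)` with `tp(x/b)` not isolated, and both may be
taken in `M`. If `tp(a/b)` were isolated, then `M`, being atomic over `a`, would be atomic over `b`.
-/

open Language

universe u₁ u₂ w₁ w₂

variable {L : FirstOrder.Language.{u₁, u₂}} {M N : Type*} [L.Structure M] [L.Structure N]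
  {α β γ : Type*}

section Types

/-- The tuples `u` in `M` and `u'` in `N` have the same complete type over `∅`. Both may be indexed
by an arbitrary type; for `Fin n` this is `TpEq` or `TpEqCross`. -/
def SameTp (L : FirstOrder.Language.{u₁, u₂}) {M N : Type*} [L.Structure M] [L.Structure N]
    {γ : Type*} (u : γ → M) (u' : γ → N) : Prop :=
  ∀ ψ : L.Formula γ, ψ.Realize u ↔ ψ.Realize u'

/-- The type of the tuple `v` over the tuple `w` is isolated. Formulas take the parameters `w`
before the tuple `v`, as in `Set.Definable`, hence in the opposite order to `IsolatedOver`. -/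
def Isolated (L : FirstOrder.Language.{u₁, u₂}) {M : Type*} [L.Structure M] {α β : Type*}
    (v : α → M) (w : β → M) : Prop :=
  ∃ φ : L.Formula (β ⊕ α), φ.Realize (Sum.elim w v) ∧
    ∀ v', φ.Realize (Sum.elim w v') → SameTp L (Sum.elim w v) (Sum.elim w v')

namespace SameTp

theorem of_imp {u : γ → M} {u' : γ → N} (h : ∀ ψ : L.Formula γ, ψ.Realize u → ψ.Realize u') :
    SameTp L u u' := fun ψ =>
  ⟨h ψ, not_imp_not.1 fun hψ => Formula.realize_not.1 (h ψ.not (Formula.realize_not.2 hψ))⟩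

@[refl]
theorem refl (u : γ → M) : SameTp L u u := fun _ => Iff.rfl

@[symm]
theorem symm {u : γ → M} {u' : γ → N} (h : SameTp L u u') : SameTp L u' u := fun ψ => (h ψ).symm

theorem trans {P : Type*} [L.Structure P] {u : γ → M} {u' : γ → N} {u'' : γ → P}
    (h : SameTp L u u') (h' : SameTp L u' u'') : SameTp L u u'' := fun ψ => (h ψ).trans (h' ψ)

theorem comp {u : γ → M} {u' : γ → N} (h : SameTp L u u') (f : α → γ) :
    SameTp L (u ∘ f) (u' ∘ f) := fun ψ => by
  simpa only [Formula.realize_relabel] using h (ψ.relabel f)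

theorem reindex {u : γ → M} {u' : γ → N} (h : SameTp L u u') {v : α → M} {v' : α → N}
    (hv : ∀ j, ∃ i, u i = v j ∧ u' i = v' j) : SameTp L v v' := by
  choose f hf hf' using hv
  exact funext hf ▸ funext hf' ▸ h.comp f

theorem map (g : M ↪ₑ[L] N) (v : γ → M) : SameTp L v (g ∘ v) :=
  fun ψ => (g.map_formula ψ v).symm

theorem exists_realize [Finite α] {w : β → M} {w' : β → N} (h : SameTp L w w')
    {φ : L.Formula (β ⊕ α)} {v : α → M} (hv : φ.Realize (Sum.elim w v)) :
    ∃ v' : α → N, φ.Realize (Sum.elim w' v') :=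
  Formula.realize_iExs.1 ((h (φ.iExs α)).1 (Formula.realize_iExs.2 ⟨v, hv⟩))

theorem sumElim_of_isolating [Finite α] {w : β → M} {w' : β → N} (h : SameTp L w w')
    {φ : L.Formula (β ⊕ α)} {v : α → M}
    (hφ : ∀ v₁, φ.Realize (Sum.elim w v₁) → SameTp L (Sum.elim w v) (Sum.elim w v₁))
    {v' : α → N} (hv' : φ.Realize (Sum.elim w' v')) :
    SameTp L (Sum.elim w v) (Sum.elim w' v') := by
  refine of_imp fun ψ hψ => ?_
  have hM : ((φ.imp ψ).iAlls α).Realize w :=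
    Formula.realize_iAlls.2 fun v₁ => Formula.realize_imp.2 fun hv₁ => (hφ v₁ hv₁ ψ).1 hψ
  exact Formula.realize_imp.1 (Formula.realize_iAlls.1 ((h _).1 hM) v') hv'

end SameTp

namespace Isolated

theorem exists_sameTp [Finite α] {v : α → M} {w : β → M} (h : Isolated L v w) {w' : β → N}
    (hw : SameTp L w w') : ∃ v' : α → N, SameTp L (Sum.elim w v) (Sum.elim w' v') := by
  obtain ⟨φ, hv, hφ⟩ := h
  obtain ⟨v', hv'⟩ := hw.exists_realize hv
  exact ⟨v', hw.sumElim_of_isolating hφ hv'⟩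

theorem of_sameTp [Finite α] {v : α → M} {w : β → M} (h : Isolated L v w) {v' : α → N} {w' : β → N}
    (h' : SameTp L (Sum.elim w v) (Sum.elim w' v')) : Isolated L v' w' := by
  obtain ⟨φ, hv, hφ⟩ := h
  have hw : SameTp L w w' := h'.comp Sum.inl
  exact ⟨φ, (h' φ).1 hv, fun v₁ hv₁ => h'.symm.trans (hw.sumElim_of_isolating hφ hv₁)⟩

theorem trans [Finite γ] {u : γ → M} {v : α → M} {w : β → M}
    (hu : Isolated L u (Sum.elim w v)) (hv : Isolated L v w) : Isolated L (Sum.elim v u) w := by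
  obtain ⟨φ, hφu, hφ⟩ := hu
  obtain ⟨θ, hθv, hθ⟩ := hv
  have realize_iff (x : α ⊕ γ → M) :
      (φ.relabel (Equiv.sumAssoc β α γ) ⊓ θ.relabel (Sum.map id Sum.inl)).Realize (Sum.elim w x) ↔
        φ.Realize (Sum.elim (Sum.elim w (x ∘ Sum.inl)) (x ∘ Sum.inr)) ∧
          θ.Realize (Sum.elim w (x ∘ Sum.inl)) := by
    rw [Formula.realize_inf, Formula.realize_relabel, Formula.realize_relabel, Sum.elim_comp_map]
    congr! 2
    ext ((_ | _) | _) <;> rfl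
  refine ⟨_, (realize_iff _).2 ⟨hφu, hθv⟩, fun x hx => ?_⟩
  obtain ⟨hxφ, hxθ⟩ := (realize_iff x).1 hx
  refine ((hθ _ hxθ).sumElim_of_isolating hφ hxφ).reindex ?_
  rintro (j | j | j)
  exacts [⟨.inl (.inl j), rfl, rfl⟩, ⟨.inl (.inr j), rfl, rfl⟩, ⟨.inr j, rfl, rfl⟩]

theorem of_sumElim {u : γ → M} {v : α → M} {w : β → M}
    (h : Isolated L (Sum.elim v u) w) : Isolated L u (Sum.elim w v) := by
  obtain ⟨φ, hvu, hφ⟩ := h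
  have realize_iff (u' : γ → M) :
      (φ.relabel (Equiv.sumAssoc β α γ).symm).Realize (Sum.elim (Sum.elim w v) u') ↔
        φ.Realize (Sum.elim w (Sum.elim v u')) := by
    rw [Formula.realize_relabel]
    congr! 1
    ext (_ | _ | _) <;> rfl
  refine ⟨_, (realize_iff u).2 hvu, fun u' hu' => (hφ _ ((realize_iff u').1 hu')).reindex ?_⟩
  rintro ((j | j) | j)
  exacts [⟨.inl j, rfl, rfl⟩, ⟨.inr (.inl j), rfl, rfl⟩, ⟨.inr (.inr j), rfl, rfl⟩]

theorem mono_left [Finite α] [Finite γ] {v : α → M} {w : β → M} (h : Isolated L v w)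
    {v' : γ → M} (hv' : Set.range v' ⊆ Set.range (Sum.elim w v)) : Isolated L v' w := by
  obtain ⟨φ, hv, hφ⟩ := h
  choose f hf using fun j => hv' (Set.mem_range_self j)
  let χ : L.Formula ((β ⊕ γ) ⊕ α) := φ.relabel (Sum.map Sum.inl id) ⊓
    Formula.iInf fun j : γ =>
      (Term.var (Sum.map Sum.inl id (f j))).equal (Term.var (Sum.inl (Sum.inr j)))
  have hχ (x : γ → M) (y : α → M) : χ.Realize (Sum.elim (Sum.elim w x) y) ↔
      φ.Realize (Sum.elim w y) ∧ ∀ j, Sum.elim w y (f j) = x j := by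
    have realize_var (i : β ⊕ α) :
        Sum.elim (Sum.elim w x) y (Sum.map Sum.inl id i) = Sum.elim w y i := by
      cases i <;> rfl
    simp only [χ, Formula.realize_inf, Formula.realize_relabel, Formula.realize_iInf,
      Formula.realize_equal, Term.realize_var, realize_var, Sum.elim_inl, Sum.elim_inr,
      Sum.elim_comp_map, Sum.elim_comp_inl, Function.comp_id]
  refine ⟨χ.iExs α, Formula.realize_iExs.2 ⟨v, (hχ v' v).2 ⟨hv, hf⟩⟩, fun x hx => ?_⟩
  obtain ⟨y, hy⟩ := Formula.realize_iExs.1 hx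
  obtain ⟨hφy, hyx⟩ := (hχ x y).1 hy
  refine (hφ y hφy).reindex ?_
  rintro (j | j)
  exacts [⟨.inl j, rfl, rfl⟩, ⟨f j, hf j, hyx j⟩]

theorem iff_of_isEmpty [IsEmpty β] {v : α → M} {w : β → M} : Isolated L v w ↔
    ∃ φ : L.Formula α, φ.Realize v ∧ ∀ v' : α → M, φ.Realize v' → SameTp L v v' := by
  have elim_eq (x : α → M) : Sum.elim w x = x ∘ Equiv.emptySum β α := by
    ext (j | j)
    exacts [isEmptyElim j, rfl]
  constructor <;> rintro ⟨φ, hv, hφ⟩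
  · simp only [elim_eq] at hv hφ
    refine ⟨φ.relabel (Equiv.emptySum β α), Formula.realize_relabel.2 hv, fun v' hv' => ?_⟩
    exact (hφ v' (Formula.realize_relabel.1 hv')).reindex fun j => ⟨.inr j, rfl, rfl⟩
  · refine ⟨φ.relabel Sum.inr, Formula.realize_relabel.2 hv, fun v' hv' => ?_⟩
    rw [Formula.realize_relabel, Sum.elim_comp_inr] at hv'
    rw [elim_eq, elim_eq]
    exact (hφ v' hv').comp _

theorem of_isEmpty [IsEmpty α] (v : α → M) (w : β → M) : Isolated L v w :=
  ⟨⊤, Formula.realize_top.2 trivial, fun v' _ => Subsingleton.elim v v' ▸ SameTp.refl _⟩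

theorem of_range_subset [Finite α] {v : α → M} {w : β → M} (h : Set.range v ⊆ Set.range w) :
    Isolated L v w :=
  (of_isEmpty (Empty.elim : Empty → M) w).mono_left (h.trans (by simp [Set.Sum.elim_range]))

theorem congr_right {v : α → M} {w : β → M} (h : Isolated L v w) {w' : γ → M}
    (hw : Set.range w = Set.range w') : Isolated L v w' := by
  obtain ⟨φ, hv, hφ⟩ := h
  choose f hf using fun i => hw.subset (Set.mem_range_self i)
  choose g hg using fun j => hw.superset (Set.mem_range_self j)
  have realize_iff (v' : α → M) :
      (φ.relabel (Sum.map f id)).Realize (Sum.elim w' v') ↔ φ.Realize (Sum.elim w v') := by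
    rw [Formula.realize_relabel, Sum.elim_comp_map, Function.comp_id,
      show w' ∘ f = w from funext hf]
  refine ⟨_, (realize_iff v).2 hv, fun v' hv' => (hφ v' ((realize_iff v').1 hv')).reindex ?_⟩
  rintro (j | j)
  exacts [⟨.inl (g j), hg j, hg j⟩, ⟨.inr j, rfl, rfl⟩]

end Isolated

end Types

section Generic

/-- The Rasiowa–Sikorski lemma for the finite sets satisfying a hereditary property `P`. -/
theorem exists_generic_set {X κ : Type*} [Countable κ] {P : Finset X → Prop} (hP : Antitone P)
    (s₀ : Finset X) (hs₀ : P s₀) (D : κ → Set (Finset X))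
    (hD : ∀ k s, s₀ ⊆ s → P s → ∃ t, s ⊆ t ∧ P t ∧ t ∈ D k) :
    ∃ A : Set X, ↑s₀ ⊆ A ∧ (∀ s : Finset X, ↑s ⊆ A → P s) ∧ ∀ k, ∃ s ∈ D k, ↑s ⊆ A := by
  let _ := Encodable.ofCountable κ
  let p₀ : {s // s₀ ⊆ s ∧ P s} := ⟨s₀, subset_rfl, hs₀⟩
  let 𝒟 (k : κ) : Order.Cofinal {s // s₀ ⊆ s ∧ P s} :=
    ⟨{s | s.1 ∈ D k}, fun s =>
      let ⟨t, hst, ht, htD⟩ := hD k s.1 s.2.1 s.2.2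
      ⟨⟨t, s.2.1.trans hst, ht⟩, htD, hst⟩⟩
  let c := Order.sequenceOfCofinals p₀ 𝒟
  have hc : Monotone fun n => ((c n).1 : Set X) := fun _ _ h =>
    Finset.coe_subset.2 (Order.sequenceOfCofinals.monotone p₀ 𝒟 h)
  refine ⟨⋃ n, (c n).1, Set.subset_iUnion (fun n => ((c n).1 : Set X)) 0, fun s hs => ?_,
    fun k => ?_⟩
  · obtain ⟨n, hn⟩ := hc.directed_le.exists_mem_subset_of_finset_subset_biUnion hs
    exact hP (Finset.coe_subset.1 hn) (c n).2.2
  · exact ⟨_, Order.sequenceOfCofinals.encode_mem p₀ 𝒟 k,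
      Set.subset_iUnion (fun n => ((c n).1 : Set X)) _⟩

end Generic

section Atomic

/-- Every finite tuple of `M` has isolated type over the tuple `a`. -/
def AtomicOver (L : FirstOrder.Language.{u₁, u₂}) {M : Type*} [L.Structure M] {β : Type*}
    (a : β → M) : Prop :=
  ∀ (k : ℕ) (c : Fin k → M), Isolated L c a

/-- The relation `F` between `M` and `N` is the graph of a partial elementary map. -/
def PartialElementary (L : FirstOrder.Language.{u₁, u₂}) {M N : Type*} [L.Structure M]
    [L.Structure N] (F : Set (M × N)) : Prop :=
  SameTp L (fun x : F => x.1.1) fun x : F => x.1.2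

theorem AtomicOver.isolated [Finite α] {a : β → M} (h : AtomicOver L a) (v : α → M) :
    Isolated L v a := by
  obtain ⟨k, ⟨e⟩⟩ := Finite.exists_equiv_fin α
  refine (h k (v ∘ e.symm)).mono_left ?_
  rw [Set.Sum.elim_range, e.symm.surjective.range_comp]
  exact Set.subset_union_right

theorem AtomicOver.of_isolated [Finite α] [Finite β] {a : α → M}
    (ha : AtomicOver L a) {b : β → M} (hab : Isolated L a b) : AtomicOver L b := fun k c => by
  have hc : Isolated L c (Sum.elim b a) :=
    (ha.isolated (Sum.elim b c)).of_sumElim.congr_right <| by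
      rw [Set.Sum.elim_range, Set.Sum.elim_range, Set.union_comm]
  refine (hc.trans hab).mono_left ?_
  rintro _ ⟨j, rfl⟩
  exact ⟨.inr (.inr j), rfl⟩

theorem AtomicOver.exists_extend {a : β → M} (ha : AtomicOver L a) [Finite γ] {u : γ → M}
    {u' : γ → N} (hu : SameTp L u u') (hau : Set.range a ⊆ Set.range u) (m : M) :
    ∃ n, SameTp L (Sum.elim u fun _ : Unit => m) (Sum.elim u' fun _ : Unit => n) := by
  have hm : Isolated L (fun _ : Unit => m) u := by
    refine (ha.isolated (Sum.elim u fun _ => m)).of_sumElim.congr_right ?_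
    rw [Set.Sum.elim_range, Set.union_eq_right.2 hau]
  obtain ⟨n, hn⟩ := hm.exists_sameTp hu
  exact ⟨n (), hn⟩

namespace PartialElementary

theorem mono {F G : Set (M × N)} (hG : PartialElementary L G) (h : F ⊆ G) :
    PartialElementary L F :=
  SameTp.reindex hG fun x => ⟨⟨x, h x.2⟩, rfl, rfl⟩

theorem fst_eq_iff_snd_eq {F : Set (M × N)} (hF : PartialElementary L F) {x y : M × N}
    (hx : x ∈ F) (hy : y ∈ F) : x.1 = y.1 ↔ x.2 = y.2 := by
  simpa using hF ((Term.var ⟨x, hx⟩).equal (Term.var ⟨y, hy⟩))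

theorem insert {F : Set (M × N)} {m : M} {n : N}
    (h : SameTp L (Sum.elim (fun x : F => x.1.1) fun _ : Unit => m)
      (Sum.elim (fun x : F => x.1.2) fun _ : Unit => n)) :
    PartialElementary L (insert (m, n) F) := by
  refine h.reindex ?_
  rintro ⟨x, rfl | hx⟩
  exacts [⟨.inr (), rfl, rfl⟩, ⟨.inl ⟨x, hx⟩, rfl, rfl⟩]

theorem exists_insert_fst {F : Set (M × N)} (hF : PartialElementary L F) [Finite F] {a : β → M}
    (ha : AtomicOver L a) (haF : ∀ i, ∃ x ∈ F, x.1 = a i) (m : M) :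
    ∃ n, PartialElementary L (Insert.insert (m, n) F) := by
  obtain ⟨n, hn⟩ := ha.exists_extend hF (by simpa [Set.range_subset_iff] using haF) m
  exact ⟨n, insert hn⟩

theorem exists_insert_snd {F : Set (M × N)} (hF : PartialElementary L F) [Finite F] {a' : β → N}
    (ha' : AtomicOver L a') (haF : ∀ i, ∃ x ∈ F, x.2 = a' i) (n : N) :
    ∃ m, PartialElementary L (Insert.insert (m, n) F) := by
  obtain ⟨m, hm⟩ := ha'.exists_extend hF.symm (by simpa [Set.range_subset_iff] using haF) n
  exact ⟨m, insert hm.symm⟩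

theorem exists_elementaryEmbedding {A : Set (M × N)}
    (hA : ∀ s : Finset (M × N), ↑s ⊆ A → PartialElementary L (s : Set (M × N)))
    (htotal : ∀ m, ∃ n, (m, n) ∈ A) : ∃ g : M ↪ₑ[L] N, ∀ x ∈ A, g x.1 = x.2 := by
  classical
  choose g hg using htotal
  refine ⟨⟨g, fun k φ x => ?_⟩, fun x hx => ?_⟩
  · have h := hA (Finset.univ.image fun i => (x i, g (x i))) (by simp [Set.range_subset_iff, hg])
    exact (h.reindex fun i => ⟨⟨(x i, g (x i)), by simpa using ⟨i, rfl, rfl⟩⟩, rfl, rfl⟩ :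
      SameTp L x (g ∘ x)).symm φ
  · have h := hA {(x.1, g x.1), x} (by simp [Set.insert_subset_iff, hg, hx])
    exact (h.fst_eq_iff_snd_eq (x := (x.1, g x.1)) (by simp) (by simp)).1 rfl

end PartialElementary

theorem SameTp.partialElementary_range {a : β → M} {a' : β → N} (h : SameTp L a a') :
    PartialElementary L (Set.range fun i => (a i, a' i)) :=
  h.reindex fun ⟨_, i, hi⟩ => ⟨i, congrArg Prod.fst hi, congrArg Prod.snd hi⟩

theorem SameTp.exists_generic_partialElementary {κ : Type*} [Countable κ] [Finite β] {a : β → M}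
    {a' : β → N} (h : SameTp L a a') (D : κ → Set (M × N))
    (hD : ∀ k (s : Finset (M × N)), PartialElementary L (s : Set (M × N)) →
      (∀ i, (a i, a' i) ∈ s) →
        ∃ x ∈ D k, PartialElementary L (insert x (s : Set (M × N)))) :
    ∃ A : Set (M × N), (∀ i, (a i, a' i) ∈ A) ∧
      (∀ s : Finset (M × N), ↑s ⊆ A → PartialElementary L (s : Set (M × N))) ∧
        ∀ k, ∃ x ∈ D k, x ∈ A := by
  classical
  let s₀ := (Set.finite_range fun i => (a i, a' i)).toFinset
  have hs₀ : (s₀ : Set (M × N)) = Set.range fun i => (a i, a' i) := Set.Finite.coe_toFinset _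
  obtain ⟨A, hsA, hA, hAD⟩ := exists_generic_set
    (P := fun s : Finset (M × N) => PartialElementary L (s : Set (M × N)))
    (fun _ _ hst ht => PartialElementary.mono ht hst) s₀ (hs₀ ▸ h.partialElementary_range)
    (fun k => {s | ∃ x ∈ D k, x ∈ s}) fun k s hs₀s hs => by
      obtain ⟨x, hxD, hx⟩ := hD k s hs fun i => hs₀s (Set.Finite.mem_toFinset _ |>.2 ⟨i, rfl⟩)
      exact ⟨insert x s, Finset.subset_insert x s, by rwa [Finset.coe_insert],
        x, hxD, Finset.mem_insert_self x s⟩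
  refine ⟨A, fun i => hsA (hs₀ ▸ Set.mem_range_self i), hA, fun k => ?_⟩
  obtain ⟨s, ⟨x, hxD, hxs⟩, hsA⟩ := hAD k
  exact ⟨x, hxD, hsA hxs⟩

theorem AtomicOver.exists_elementaryEmbedding [Countable M] [Finite β] {a : β → M} {a' : β → N}
    (ha : AtomicOver L a) (h : SameTp L a a') : ∃ g : M ↪ₑ[L] N, ∀ i, g (a i) = a' i := by
  obtain ⟨A, haA, hA, hdom⟩ := h.exists_generic_partialElementary
    (fun m => {x | x.1 = m}) fun m s hs has => by
      obtain ⟨n, hn⟩ := hs.exists_insert_fst ha (fun i => ⟨_, has i, rfl⟩) m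
      exact ⟨(m, n), rfl, hn⟩
  obtain ⟨g, hg⟩ := PartialElementary.exists_elementaryEmbedding hA fun m => by
    obtain ⟨x, rfl, hx⟩ := hdom m
    exact ⟨x.2, hx⟩
  exact ⟨g, fun i => hg _ (haA i)⟩

theorem AtomicOver.nonempty_equiv [Countable M] [Countable N] [Finite β] {a : β → M} {a' : β → N}
    (ha : AtomicOver L a) (ha' : AtomicOver L a') (h : SameTp L a a') : Nonempty (M ≃[L] N) := by
  obtain ⟨A, _, hA, hdom⟩ := h.exists_generic_partialElementary
    (Sum.elim (fun m => {x | x.1 = m}) fun n => {x | x.2 = n}) fun k s hs has => by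
      cases k with
      | inl m =>
        obtain ⟨n, hn⟩ := hs.exists_insert_fst ha (fun i => ⟨_, has i, rfl⟩) m
        exact ⟨(m, n), rfl, hn⟩
      | inr n =>
        obtain ⟨m, hm⟩ := hs.exists_insert_snd ha' (fun i => ⟨_, has i, rfl⟩) n
        exact ⟨(m, n), rfl, hm⟩
  obtain ⟨g, hg⟩ := PartialElementary.exists_elementaryEmbedding hA fun m => by
    obtain ⟨x, rfl, hx⟩ := hdom (.inl m)
    exact ⟨x.2, hx⟩
  have hsurj : Function.Surjective g := fun n => by
    obtain ⟨x, rfl, hx⟩ := hdom (.inr n)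
    exact ⟨x.1, hg x hx⟩
  exact ⟨⟨Equiv.ofBijective g ⟨g.injective, hsurj⟩, g.map_fun, g.map_rel⟩⟩

end Atomic

section Compactness

variable {T : L.Theory}

/-- Compactness, in the form of Łoś's theorem for ultraproducts along an ultrafilter below `l`. -/
theorem exists_realize_of_eventually {ι : Type w₁} {l : Filter ι} [l.NeBot]
    {M : ι → Type w₂}
    [∀ i, L.Structure (M i)] [∀ i, Nonempty (M i)] [∀ i, M i ⊨ T] (u : ∀ i, α → M i) :
    ∃ (N : Theory.ModelType.{u₁, u₂, max w₁ w₂} T) (v : α → N),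
      ∀ φ : L.Formula α, (∀ᶠ i in l, φ.Realize (u i)) → φ.Realize v := by
  let N := (Ultrafilter.of l : Filter ι).Product M
  have : N ⊨ T := Theory.model_iff _ |>.2 fun φ hφ =>
    (Ultraproduct.sentence_realize φ).2 <| .of_forall fun i => T.realize_sentence_of_mem hφ
  refine ⟨.of T N, fun j => ((fun i => u i j : ∀ i, M i) : N), fun φ hφ => ?_⟩
  exact (Ultraproduct.realize_formula_cast φ fun j i => u i j).2 (Ultrafilter.of_le l hφ)

theorem typeOf_eq_typeOf_iff [Nonempty M] [Nonempty N] [M ⊨ T] [N ⊨ T] {u : γ → M} {u' : γ → N} :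
    T.typeOf u = T.typeOf u' ↔ SameTp L u u' := by
  refine ⟨fun h ψ => ?_, fun h => SetLike.ext fun φ => ?_⟩
  · rw [← Theory.CompleteType.formula_mem_typeOf (T := T), h,
      Theory.CompleteType.formula_mem_typeOf]
  · rw [Theory.CompleteType.mem_typeOf, Theory.CompleteType.mem_typeOf, h]

/-- A formula over `w` none of whose realizations is isolated splits, so some realizable half of it
omits any given type. -/
theorem exists_realize_notMem {w : β → M} {v : α → M}
    (hv : ¬ Isolated L v w) {ψ : L.Formula (β ⊕ α)} (hψ : ψ.Realize (Sum.elim w v))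
    (q : T.CompleteType (β ⊕ α)) :
    ∃ χ : L.Formula (β ⊕ α), Formula.equivSentence χ ∉ q ∧
      ∃ v', (ψ ⊓ χ).Realize (Sum.elim w v') := by
  obtain ⟨v', hψ', hvv'⟩ :
      ∃ v', ψ.Realize (Sum.elim w v') ∧ ¬ SameTp L (Sum.elim w v) (Sum.elim w v') := by
    by_contra! h
    exact hv ⟨ψ, hψ, h⟩
  obtain ⟨χ, hχ, hχ'⟩ : ∃ χ : L.Formula (β ⊕ α),
      χ.Realize (Sum.elim w v) ∧ ¬ χ.Realize (Sum.elim w v') := by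
    simpa using mt SameTp.of_imp hvv'
  by_cases hq : Formula.equivSentence χ ∈ q
  · refine ⟨χ.not, ?_, v', Formula.realize_inf.2 ⟨hψ', Formula.realize_not.2 hχ'⟩⟩
    rwa [Formula.equivSentence_not, q.not_mem_iff, not_not]
  · exact ⟨χ, hq, v, Formula.realize_inf.2 ⟨hψ, hχ⟩⟩

/-- If `φ` had no isolated realization over `w`, one could diagonalize against the countably many
types by a decreasing sequence of realizable formulas, each omitting one of them. -/
theorem exists_isolated_realize [Nonempty M] [M ⊨ T] [Countable (T.CompleteType (β ⊕ α))]
    {φ : L.Formula (β ⊕ α)} {w : β → M} (hφ : ∃ v, φ.Realize (Sum.elim w v)) :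
    ∃ v, φ.Realize (Sum.elim w v) ∧ Isolated L v w := by
  by_contra! hnot
  let S (ψ : L.Formula (β ⊕ α)) : Set (α → M) := {v | (φ ⊓ ψ).Realize (Sum.elim w v)}
  let _ := Encodable.ofCountable (T.CompleteType (β ⊕ α))
  let _ : Preorder {ψ // (S ψ).Nonempty} := Preorder.lift fun ψ => OrderDual.toDual (S ψ.1)
  have omit_type (q : T.CompleteType (β ⊕ α)) : IsCofinal {ψ : {ψ // (S ψ).Nonempty} |
      ∃ χ, Formula.equivSentence χ ∉ q ∧ S ψ.1 ⊆ {v | χ.Realize (Sum.elim w v)}} := by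
    rintro ⟨ψ, v, hv⟩
    obtain ⟨χ, hχ, v', hv'⟩ := exists_realize_notMem (hnot v (Formula.realize_inf.1 hv).1) hv q
    rw [Formula.realize_inf, Formula.realize_inf] at hv'
    refine ⟨⟨ψ ⊓ χ, v', by simpa [S, and_assoc] using hv'⟩, ⟨χ, hχ, fun x hx => ?_⟩, fun x hx => ?_⟩
    all_goals simp only [S, Set.mem_ofPred_eq, Formula.realize_inf] at hx ⊢
    exacts [hx.2.2, ⟨hx.1, hx.2.1⟩]
  let 𝒟 (q : T.CompleteType (β ⊕ α)) : Order.Cofinal {ψ // (S ψ).Nonempty} := ⟨_, omit_type q⟩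
  obtain ⟨v₀, hv₀⟩ := hφ
  let c := Order.sequenceOfCofinals ⟨⊤, v₀, by simpa [S] using hv₀⟩ 𝒟
  have hc : Antitone fun n => S (c n).1 := fun i j hij =>
    (Order.sequenceOfCofinals.monotone _ 𝒟 hij : c i ≤ c j)
  choose x hx using fun n => (c n).2
  obtain ⟨N, v, hv⟩ := exists_realize_of_eventually (T := T) (l := Filter.atTop)
    fun n => Sum.elim w (x n)
  obtain ⟨χ, hχ, hcχ⟩ := Order.sequenceOfCofinals.encode_mem _ 𝒟 (T.typeOf v)
  refine hχ (Theory.CompleteType.formula_mem_typeOf.2 (hv χ ?_))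
  filter_upwards [Filter.eventually_ge_atTop (Encodable.encode (T.typeOf v) + 1)] with n hn
  exact hcχ (hc hn (hx n))

end Compactness

section CompleteTheory

/-- The filter on tuples of `M` generated by the sets defined by formulas in the type of `c`. -/
def tpFilter (L : FirstOrder.Language.{u₁, u₂}) {N : Type*} [L.Structure N] {α : Type*}
    (c : α → N) (M : Type*) [L.Structure M] : Filter (α → M) :=
  ⨅ (φ : L.Formula α) (_ : φ.Realize c), Filter.principal {x | φ.Realize x}

theorem hasBasis_tpFilter (c : α → N) :
    (tpFilter L c M).HasBasis (fun φ : L.Formula α => φ.Realize c) fun φ => {x | φ.Realize x} :=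
  Filter.hasBasis_biInf_principal'
    (fun φ hφ ψ hψ => ⟨φ ⊓ ψ, Formula.realize_inf.2 ⟨hφ, hψ⟩,
      fun _ hx => (Formula.realize_inf.1 hx).1, fun _ hx => (Formula.realize_inf.1 hx).2⟩)
    ⟨⊤, Formula.realize_top.2 trivial⟩

theorem eventually_tpFilter {c : α → N} {φ : L.Formula α} (hφ : φ.Realize c) :
    ∀ᶠ x in tpFilter L c M, φ.Realize x :=
  (hasBasis_tpFilter c).mem_of_mem hφ

variable {T : L.Theory}

theorem sameTp_of_isComplete (hT : T.IsComplete) [Nonempty M] [Nonempty N] [M ⊨ T] [N ⊨ T]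
    (u : Empty → M) (u' : Empty → N) : SameTp L u u' := fun ψ => by
  rw [Subsingleton.elim u default, Subsingleton.elim u' default]
  exact (hT.realize_sentence_iff ψ M).trans (hT.realize_sentence_iff ψ N).symm

theorem tpFilter_neBot (hT : T.IsComplete) [Nonempty M] [Nonempty N] [M ⊨ T] [N ⊨ T] [Finite α]
    (c : α → N) : (tpFilter L c M).NeBot := by
  refine (hasBasis_tpFilter c).neBot_iff.2 fun {φ} hφ => ?_
  obtain ⟨x, hx⟩ := (sameTp_of_isComplete hT Empty.elim Empty.elim).exists_realize (N := M)
    (φ := φ.relabel Sum.inr) (v := c) (Formula.realize_relabel.2 hφ)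
  rw [Formula.realize_relabel, Sum.elim_comp_inr] at hx
  exact ⟨x, hx⟩

theorem exists_joint_realization (hT : T.IsComplete) {ι : Type w₁} {α : ι → Type w₂}
    [∀ i, Finite (α i)] {N : ι → Type*} [∀ i, L.Structure (N i)] [∀ i, Nonempty (N i)]
    [∀ i, N i ⊨ T] (c : ∀ i, α i → N i) :
    ∃ (M : Theory.ModelType.{u₁, u₂, max w₁ w₂ u₁ u₂} T) (d : (Σ i, α i) → M),
      ∀ i, SameTp L (c i) (d ∘ Sigma.mk i) := by
  obtain ⟨M₀⟩ := hT.1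
  have (i : ι) : (tpFilter L (c i) M₀).NeBot := tpFilter_neBot hT (c i)
  obtain ⟨M, d, hd⟩ := exists_realize_of_eventually (T := T)
    (l := Filter.pi fun i => tpFilter L (c i) M₀) fun x (j : Σ i, α i) => x j.1 j.2
  refine ⟨M, d, fun i => .of_imp fun φ hφ => ?_⟩
  refine Formula.realize_relabel.1 (hd (φ.relabel (Sigma.mk i)) ?_)
  filter_upwards [(Filter.tendsto_eval_pi _ i).eventually (eventually_tpFilter hφ)] with x hx
  exact Formula.realize_relabel.2 hx

/-- The pairs `(x, a)` are taken along the filter of those `x` that satisfy formulas of the type of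
`a` without realizing it; no formula over `a` forcing `x` to realize the type of `a` survives. -/
theorem exists_sameTp_pair_not_isolated {M : Type w₂} [L.Structure M] [Nonempty M] [M ⊨ T]
    {α : Type w₁} [Finite α] {w : Empty → M} {a : α → M} (ha : ¬ Isolated L a w) :
    ∃ (N : Theory.ModelType.{u₁, u₂, max w₁ w₂} T) (x b : α → N),
      SameTp L a x ∧ SameTp L a b ∧ ¬ Isolated L x b := by
  let l := tpFilter L a M ⊓ Filter.principal {x | ¬ SameTp L a x}
  have : l.NeBot := ((hasBasis_tpFilter a).inf_principal _).neBot_iff.2 fun {φ} hφ => by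
    by_contra hφ'
    refine ha (Isolated.iff_of_isEmpty.2 ⟨φ, hφ, fun x hx => ?_⟩)
    by_contra hax
    exact hφ' ⟨x, hx, hax⟩
  obtain ⟨N, v, hv⟩ := exists_realize_of_eventually (T := T) (l := l) fun x => Sum.elim a x
  have hb : SameTp L a (v ∘ Sum.inl) := .of_imp fun φ hφ =>
    Formula.realize_relabel.1 <| hv (φ.relabel Sum.inl) <| .of_forall fun _ =>
      Formula.realize_relabel.2 hφ
  have hx : SameTp L a (v ∘ Sum.inr) := .of_imp fun φ hφ => by
    refine Formula.realize_relabel.1 (hv (φ.relabel Sum.inr) ?_)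
    filter_upwards [Filter.mem_inf_of_left (eventually_tpFilter hφ)] with _ hx
    exact Formula.realize_relabel.2 hx
  refine ⟨N, v ∘ Sum.inr, v ∘ Sum.inl, hx, hb, fun ⟨φ, hφv, hφ⟩ => ?_⟩
  refine Formula.realize_not.1 (hv φ.not ?_) (by rwa [Sum.elim_comp_inl_inr] at hφv)
  filter_upwards [Filter.mem_inf_of_right (Filter.mem_principal_self _)] with x hax
  refine Formula.realize_not.2 fun hφx => hax ?_
  exact hx.trans ((hb.symm.sumElim_of_isolating hφ hφx).comp Sum.inr)

end CompleteTheory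

section Countable

theorem exists_countable_elementarySubstructure [Countable L.Symbols] [Infinite M] [Countable α]
    (v : α → M) : ∃ S : L.ElementarySubstructure M, Set.range v ⊆ S ∧ Countable S := by
  obtain ⟨S, hvS, hS⟩ := exists_elementarySubstructure_card_eq L (Set.range v)
    (ℵ₀ : Cardinal.{0}) le_rfl
    (by rw [lift_aleph0, lift_le_aleph0, mk_le_aleph0_iff]; exact Set.countable_range v)
    (by rw [lift_aleph0, lift_le_aleph0]; exact mk_le_aleph0_iff.2 ‹_›) (by simp)
  exact ⟨S, hvS, mk_le_aleph0_iff.1 (by simpa using hS.le)⟩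

end Countable

section AtomicSubstructure

theorem meetsDefinable_of_forall_finset {A : Set M}
    (hA : ∀ s : Finset M, ↑s ⊆ A → ∀ φ : L.Formula (s ⊕ Fin 1),
      (∃ v, φ.Realize (Sum.elim (fun x : s => x.1) v)) →
        ∃ v, φ.Realize (Sum.elim (fun x : s => x.1) v) ∧ v 0 ∈ A) : L.MeetsDefinable A := by
  rintro D ⟨x, hx⟩ hD
  obtain ⟨s, hsA, hs⟩ := Set.definable_iff_finitely_definable.1 hD
  obtain ⟨φ, hφ⟩ := Set.definable_iff_exists_formula_sum.1 hs
  obtain ⟨v, hv, hvA⟩ := hA s hsA φ ⟨fun _ => x, hφ.subset hx⟩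
  exact ⟨v 0, hφ.superset hv, hvA⟩

variable {T : L.Theory}

theorem Isolated.exists_insert [Nonempty M] [M ⊨ T] [DecidableEq M] {a : β → M} {S s : Finset M}
    [Countable (T.CompleteType (S ⊕ Fin 1))] (haS : ∀ i, a i ∈ S)
    (hS : Isolated L (fun x : S => x.1) a) (hs : s ⊆ S) {φ : L.Formula (s ⊕ Fin 1)}
    (hφ : ∃ v, φ.Realize (Sum.elim (fun x : s => x.1) v)) :
    ∃ v, φ.Realize (Sum.elim (fun x : s => x.1) v) ∧
      Isolated L (fun x : (insert (v 0) S : Finset M) => x.1) a := by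
  have realize_iff (v : Fin 1 → M) :
      (φ.relabel (Sum.map (fun x => (⟨x.1, hs x.2⟩ : S)) id)).Realize
        (Sum.elim (fun x : S => x.1) v) ↔ φ.Realize (Sum.elim (fun x : s => x.1) v) := by
    rw [Formula.realize_relabel, Sum.elim_comp_map]
    rfl
  obtain ⟨v, hv, hvS⟩ := exists_isolated_realize (T := T) (hφ.imp fun v => (realize_iff v).2)
  refine ⟨v, (realize_iff v).1 hv, ?_⟩
  have hvaS : Isolated L v (Sum.elim a fun x : S => x.1) := hvS.congr_right <| by
    rw [Set.Sum.elim_range, Set.union_eq_right.2]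
    simpa [Set.range_subset_iff] using haS
  refine (hvaS.trans hS).mono_left ?_
  rintro _ ⟨⟨x, hx⟩, rfl⟩
  rcases Finset.mem_insert.1 hx with rfl | hx
  exacts [⟨.inr (.inr 0), rfl⟩, ⟨.inr (.inl ⟨x, hx⟩), rfl⟩]

theorem exists_meetsDefinable_isolated {M : Type w₁} [L.Structure M] [Nonempty M] [M ⊨ T]
    [Countable M] [Countable L.Symbols]
    (hT : ∀ (γ : Type w₁) [Finite γ], Countable (T.CompleteType γ)) [Finite β] (a : β → M) :
    ∃ A : Set M, L.MeetsDefinable A ∧ (∀ i, a i ∈ A) ∧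
      ∀ s : Finset M, ↑s ⊆ A → Isolated L (fun x : s => x.1) a := by
  classical
  let P (S : Finset M) : Prop := Isolated L (fun x : S => x.1) a
  have hP : Antitone P := fun s t hst ht => ht.mono_left <| by
    rintro _ ⟨x, rfl⟩
    exact ⟨.inr ⟨x, hst x.2⟩, rfl⟩
  let s₀ := (Set.finite_range a).toFinset
  have has₀ (i : β) : a i ∈ s₀ := by simp [s₀]
  obtain ⟨A, haA, hA, hAD⟩ := exists_generic_set hP s₀
    (.of_range_subset (by rintro _ ⟨x, rfl⟩; exact (Set.finite_range a).mem_toFinset.1 x.2))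
    (fun k : Σ s : Finset M, L.Formula (s ⊕ Fin 1) => {t | P (t ∪ k.1) →
      (∃ v, k.2.Realize (Sum.elim (fun x : k.1 => x.1) v)) →
        ∃ v, k.2.Realize (Sum.elim (fun x : k.1 => x.1) v) ∧ v 0 ∈ t})
    fun ⟨s, φ⟩ S haS hS => by
      by_cases h : P (S ∪ s) ∧ ∃ v, φ.Realize (Sum.elim (fun x : s => x.1) v)
      · obtain ⟨v, hv, hvS⟩ := h.1.exists_insert (T := T)
          (fun i => Finset.mem_union_left s (haS (has₀ i))) Finset.subset_union_right h.2
        exact ⟨_, Finset.subset_union_left.trans (Finset.subset_insert _ _), hvS,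
          fun _ _ => ⟨v, hv, Finset.mem_insert_self _ _⟩⟩
      · exact ⟨S, subset_rfl, hS, fun h₁ h₂ => (h ⟨h₁, h₂⟩).elim⟩
  refine ⟨A, meetsDefinable_of_forall_finset fun s hs φ hφ => ?_, fun i => haA (has₀ i), hA⟩
  obtain ⟨t, ht, htA⟩ := hAD ⟨s, φ⟩
  obtain ⟨v, hv, hvt⟩ := ht (hA _ (by simp [htA, hs])) hφ
  exact ⟨v, hv, htA hvt⟩

theorem exists_atomicOver_elementarySubstructure {M : Type w₁} [L.Structure M] [Nonempty M]
    [M ⊨ T] [Countable M] [Countable L.Symbols]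
    (hT : ∀ (γ : Type w₁) [Finite γ], Countable (T.CompleteType γ)) [Finite β] (a : β → M) :
    ∃ (S : L.ElementarySubstructure M) (a' : β → S), S.subtype ∘ a' = a ∧ AtomicOver L a' := by
  classical
  obtain ⟨A, hmeets, haA, hA⟩ := exists_meetsDefinable_isolated hT a
  let S := hmeets.toElementarySubstructure
  have hSA : (S : Set M) = A := hmeets.closure_eq_self
  let a' (i : β) : S := ⟨a i, hSA.superset (haA i)⟩
  refine ⟨S, a', rfl, fun k c => ?_⟩
  have hc : Isolated L (S.subtype ∘ c) a := by
    refine (hA (Finset.univ.image fun j => (c j : M)) ?_).mono_left ?_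
    · simpa [Set.range_subset_iff] using fun j => hSA.subset (c j).2
    · rintro _ ⟨j, rfl⟩
      exact ⟨.inr ⟨c j, by simp⟩, rfl⟩
  refine hc.of_sameTp ((SameTp.map S.subtype (Sum.elim a' c)).symm.reindex ?_)
  rintro (i | j)
  exacts [⟨.inl i, rfl, rfl⟩, ⟨.inr j, rfl, rfl⟩]

end AtomicSubstructure

section CountableModels

variable {L : FirstOrder.Language.{0, 0}} {T : L.Theory}

/-- Every complete type of `T` over `∅` in finitely many variables is realized in `M`. -/
def WeaklySaturated (T : L.Theory) (M : Type) [L.Structure M] : Prop :=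
  ∀ (N : Theory.ModelType.{0, 0, 0} T) (k : ℕ) (c : Fin k → N), ∃ c' : Fin k → M, SameTp L c c'

/-- Every countable tuple of a model of `T` lies in the image of an elementary embedding of some
`K i`; a list of the countable models of `T` has this property. -/
def CoversTuples {ι : Type} (K : ι → Theory.ModelType.{0, 0, 0} T) : Prop :=
  ∀ (N : Theory.ModelType.{0, 0, 0} T) (γ : Type) [Countable γ] (v : γ → N),
    ∃ (i : ι) (g : K i ↪ₑ[L] N) (w : γ → K i), g ∘ w = v

namespace WeaklySaturated

theorem exists_sameTp {M : Type} [L.Structure M] (hM : WeaklySaturated T M) {γ : Type} [Finite γ]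
    {N : Theory.ModelType.{0, 0, 0} T} (c : γ → N) : ∃ c' : γ → M, SameTp L c c' := by
  obtain ⟨k, ⟨e⟩⟩ := Finite.exists_equiv_fin γ
  obtain ⟨c', hc'⟩ := hM N k (c ∘ e.symm)
  exact ⟨c' ∘ e, hc'.reindex fun j => ⟨e j, by simp, rfl⟩⟩

theorem of_embedding {M N : Type} [L.Structure M] [L.Structure N] (hM : WeaklySaturated T M)
    (g : M ↪ₑ[L] N) : WeaklySaturated T N := fun P k c =>
  (hM P k c).elim fun c' hc' => ⟨g ∘ c', hc'.trans (.map g c')⟩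

end WeaklySaturated

theorem exists_coversTuples [Countable L.Symbols]
    (hinf : ∀ N : Theory.ModelType.{0, 0, 0} T, Infinite N) (hfin : numCountableModels L T < ℵ₀) :
    ∃ (r : ℕ) (K : Fin r → Theory.ModelType.{0, 0, 0} T),
      (∀ i, Countable (K i)) ∧ CoversTuples K := by
  have : Finite (Quotient (cmSetoid L T)) := lt_aleph0_iff_finite.1 hfin
  obtain ⟨r, ⟨e⟩⟩ := Finite.exists_equiv_fin (Quotient (cmSetoid L T))
  refine ⟨r, fun i => (e.symm i).out.1, fun i => (e.symm i).out.2.1, fun N γ _ v => ?_⟩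
  have := hinf N
  obtain ⟨S, hvS, hS⟩ := exists_countable_elementarySubstructure (L := L) v
  obtain ⟨i, hi⟩ := e.symm.surjective ⟦⟨.of T S, hS, hinf (.of T S)⟩⟧
  obtain ⟨f⟩ : Nonempty ((e.symm i).out.1 ≃[L] S) := Quotient.exact ((Quotient.out_eq _).trans hi)
  refine ⟨i, S.subtype.comp f.toElementaryEmbedding,
    fun j => f.symm ⟨v j, hvS (Set.mem_range_self j)⟩, funext fun j => ?_⟩
  simp

namespace CoversTuples

variable {ι : Type} {K : ι → Theory.ModelType.{0, 0, 0} T}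

theorem countable_completeType [Countable ι] [∀ i, Countable (K i)] (hK : CoversTuples K)
    (γ : Type) [Finite γ] : Countable (T.CompleteType γ) := by
  refine Function.Surjective.countable (f := fun v : Σ i, γ → K i => T.typeOf v.2) fun p => ?_
  obtain ⟨N, v, rfl⟩ := T.exists_modelType_is_realized_in p
  obtain ⟨i, g, w, rfl⟩ := hK N γ v
  exact ⟨⟨i, w⟩, typeOf_eq_typeOf_iff.2 (.map g w)⟩

/-- The tuple realizes, for each `K i` that is not weakly saturated, a type omitted in `K i`. -/
theorem exists_forall_weaklySaturated [Finite ι] (hK : CoversTuples K) (hT : T.IsComplete) :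
    ∃ (n : ℕ) (M : Theory.ModelType.{0, 0, 0} T) (a : Fin n → M),
      ∀ (N : Theory.ModelType.{0, 0, 0} T) (a' : Fin n → N),
        SameTp L a a' → WeaklySaturated T N := by
  have h (i : ι) : ∃ (N : Theory.ModelType.{0, 0, 0} T) (k : ℕ) (c : Fin k → N),
      (∃ c' : Fin k → K i, SameTp L c c') → WeaklySaturated T (K i) := by
    by_cases hi : WeaklySaturated T (K i)
    · exact ⟨K i, 0, Fin.elim0, fun _ => hi⟩
    · simp only [WeaklySaturated, not_forall] at hi
      obtain ⟨N, k, c, hc⟩ := hi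
      exact ⟨N, k, c, fun hc' => (hc hc').elim⟩
  choose P k c hc using h
  obtain ⟨M, d, hd⟩ := exists_joint_realization hT c
  obtain ⟨n, ⟨e⟩⟩ := Finite.exists_equiv_fin (Σ i, Fin (k i))
  refine ⟨n, M, d ∘ e.symm, fun N a' ha' => ?_⟩
  obtain ⟨i, g, w, rfl⟩ := hK N (Fin n) a'
  have hdw : SameTp L d (w ∘ e) := (ha'.trans (SameTp.map g w).symm).reindex fun j =>
    ⟨e j, by simp, rfl⟩
  exact (hc i ⟨_, (hd i).trans (hdw.comp (Sigma.mk i))⟩).of_embedding g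

theorem exists_atomicOver_weaklySaturated [Countable L.Symbols] [Finite ι]
    [∀ i, Countable (K i)] (hK : CoversTuples K) (hT : T.IsComplete) :
    ∃ (n : ℕ) (M : Theory.ModelType.{0, 0, 0} T) (a : Fin n → M),
      Countable M ∧ AtomicOver L a ∧ WeaklySaturated T M := by
  obtain ⟨n, N, a, ha⟩ := hK.exists_forall_weaklySaturated hT
  obtain ⟨i, g, w, rfl⟩ := hK N (Fin n) a
  obtain ⟨S, a', rfl, ha'⟩ :=
    exists_atomicOver_elementarySubstructure (fun γ _ => hK.countable_completeType γ) w
  have haa' : SameTp L (g ∘ S.subtype ∘ a') a' :=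
    (SameTp.map g _).symm.trans (SameTp.map S.subtype a').symm
  exact ⟨n, .of T S, a', inferInstanceAs (Countable S), ha', ha (.of T S) a' haa'⟩

end CoversTuples

theorem WeaklySaturated.atomicOver_of_isEmpty {M : Type} [L.Structure M] (hM : WeaklySaturated T M)
    {w : Empty → M} (hw : AtomicOver L w) (N : Theory.ModelType.{0, 0, 0} T) (w' : Empty → N) :
    AtomicOver L w' := fun k c => by
  obtain ⟨c', hc'⟩ := hM N k c
  refine (hw k c').of_sameTp (hc'.symm.reindex ?_)
  rintro (j | j)
  exacts [j.elim, ⟨j, rfl, rfl⟩]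

theorem numCountableModels_eq_one (hT : T.IsComplete)
    (hinf : ∀ N : Theory.ModelType.{0, 0, 0} T, Infinite N) {M : Theory.ModelType.{0, 0, 0} T}
    [Countable M] (hM : WeaklySaturated T M) {w : Empty → M} (hw : AtomicOver L w) :
    numCountableModels L T = 1 := by
  refine Cardinal.eq_one_iff_unique.2 ⟨⟨?_⟩, ⟨⟦⟨M, inferInstance, hinf M⟩⟧⟩⟩
  rintro ⟨N₁, _, _⟩ ⟨N₂, _, _⟩
  have hN (N : Theory.ModelType.{0, 0, 0} T) : AtomicOver L (Empty.elim : Empty → N) :=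
    hM.atomicOver_of_isEmpty hw N _
  exact Quotient.sound ((hN N₁).nonempty_equiv (hN N₂) (sameTp_of_isComplete hT _ _))

theorem WeaklySaturated.exists_sameTp_not_isolated {α : Type} [Finite α]
    {M : Theory.ModelType.{0, 0, 0} T} (hM : WeaklySaturated T M) {a : α → M}
    (ha : AtomicOver L a) {w : Empty → M} (haw : ¬ Isolated L a w) :
    ∃ b : α → M, SameTp L b a ∧ ¬ Isolated L a b := by
  obtain ⟨N, x, b, -, hb, hxb⟩ := exists_sameTp_pair_not_isolated (T := T) haw
  obtain ⟨c, hc⟩ := hM.exists_sameTp (Sum.elim b x)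
  have hbc : SameTp L b (c ∘ Sum.inl) := hc.comp Sum.inl
  refine ⟨c ∘ Sum.inl, (hb.trans hbc).symm, fun h => hxb ?_⟩
  refine ((ha.of_isolated h).isolated (c ∘ Sum.inr)).of_sameTp ?_
  rw [Sum.elim_comp_inl_inr]
  exact hc.symm

theorem isolated_iff_isolated0 {M : Type} [L.Structure M] {n : ℕ} {a : Fin n → M}
    {w : Empty → M} : Isolated L a w ↔ Isolated0 L a := by
  rw [Isolated.iff_of_isEmpty]
  exact ⟨fun ⟨φ, ha, h⟩ => ⟨φ, ha, fun a' ha' ψ => (h a' ha' ψ).1⟩,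
    fun ⟨φ, ha, h⟩ => ⟨φ, ha, fun a' ha' => .of_imp (h a' ha')⟩⟩

theorem Isolated.of_isolatedOver {M : Type} [L.Structure M] {n m : ℕ} {a : Fin n → M}
    {b : Fin m → M} (h : IsolatedOver L a b) : Isolated L a b := by
  obtain ⟨φ, ha, h⟩ := h
  have realize_iff (a' : Fin n → M) :
      (φ.relabel Sum.swap).Realize (Sum.elim b a') ↔ φ.Realize (Sum.elim a' b) := by
    rw [Formula.realize_relabel, Sum.elim_swap]
  refine ⟨φ.relabel Sum.swap, (realize_iff a).2 ha, fun a' ha' => ?_⟩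
  have haa' : SameTp L (Sum.elim a b) (Sum.elim a' b) := .of_imp (h a' ((realize_iff a').1 ha'))
  simpa only [Sum.elim_swap] using haa'.comp Sum.swap

end CountableModels

/-- **Fact 3.1 (folklore).** Suppose the countable complete theory `T` is not
`ℵ₀`-categorical but has only finitely many countable models.  Then there are a
tuple `a` and a prime model `M₀` over `a` such that `tp(a)` is nonisolated and
every complete `n`-type of `T` over `∅` is realized in `M₀`; moreover there is
a tuple `b` in `M₀` with `tp(b) = tp(a)` and `tp(a/b)` nonisolated. -/
theorem fact_3_1
    (L : FirstOrder.Language.{0, 0}) (T : L.Theory)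
    (hL : L.card ≤ ℵ₀) (hT : T.IsComplete)
    (hinf : ∀ N : Language.Theory.ModelType.{0, 0, 0} T, Infinite N)
    (hncat : numCountableModels L T ≠ 1)
    (hfin : numCountableModels L T < ℵ₀) :
    ∃ (n : ℕ) (M₀ : Language.Theory.ModelType.{0, 0, 0} T) (a : Fin n → M₀),
      PrimeOver L T M₀ a ∧ ¬ Isolated0 L a ∧
      (∀ (N : Language.Theory.ModelType.{0, 0, 0} T) (k : ℕ) (c : Fin k → N),
        ∃ c' : Fin k → M₀, TpEqCross L c c') ∧
      ∃ b : Fin n → M₀, TpEq L b a ∧ ¬ IsolatedOver L a b := by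
  have : Countable L.Symbols := mk_le_aleph0_iff.1 hL
  obtain ⟨r, K, _, hK⟩ := exists_coversTuples hinf hfin
  obtain ⟨n, M, a, _, ha, hM⟩ := hK.exists_atomicOver_weaklySaturated hT
  have ha₀ : ¬ Isolated L a (Empty.elim : Empty → M) := fun h =>
    hncat (numCountableModels_eq_one hT hinf hM (ha.of_isolated h))
  obtain ⟨b, hba, hab⟩ := hM.exists_sameTp_not_isolated ha ha₀
  exact ⟨n, M, a, fun N a' h => ha.exists_elementaryEmbedding h, mt isolated_iff_isolated0.2 ha₀,
    hM, b, hba, mt Isolated.of_isolatedOver hab⟩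

end KimPaper
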